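/- arXiv:2604.02928 — 4 statements merged into one kernel-verified Lean document; each statement's English description precedes it below -/
import Mathlib

section
/- Let X̃ ∈ ℝ^{r×n} be a real matrix, g ∈ ℝ^r a vector, and γ ∈ ℝ with γ ≠ 0. Define the augmented matrix X̃_new = [[X̃, g],[0ᵀ, γ]] ∈ ℝ^{(r+1)×(n+1)} (X̃ with the column (g;γ) appended and a zero row appended below X̃). Then λ_min(X̃_new X̃_newᵀ) ≤ λ_min(X̃ X̃ᵀ) and λ_max(X̃_new X̃_newᵀ) ≥ λ_max(X̃ X̃ᵀ); consequently the spectral condition number of X̃_new X̃_newᵀ is at least that of X̃ X̃ᵀ when X̃ X̃ᵀ is positive definite. -/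
open Matrix

/-- Column vector as an `r × 1` matrix. -/
def colv {r : ℕ} (g : Fin r → ℝ) : Matrix (Fin r) (Fin 1) ℝ :=
  Matrix.of fun i _ => g i

/-- Smallest eigenvalue of a Hermitian (symmetric) real matrix. -/
noncomputable def lmin {ι : Type*} [Fintype ι] [DecidableEq ι]
    (H : Matrix ι ι ℝ) (hH : H.IsHermitian) : ℝ :=
  ⨅ i, hH.eigenvalues i

/-- Largest eigenvalue of a Hermitian (symmetric) real matrix. -/
noncomputable def lmax {ι : Type*} [Fintype ι] [DecidableEq ι]
    (H : Matrix ι ι ℝ) (hH : H.IsHermitian) : ℝ :=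
  ⨆ i, hH.eigenvalues i

lemma quad_diag {ι : Type*} [Fintype ι] [DecidableEq ι]
    (H : Matrix ι ι ℝ) (hH : H.IsHermitian) (w : ι → ℝ) :
    ∃ y : ι → ℝ, w ⬝ᵥ (H *ᵥ w) = ∑ i, hH.eigenvalues i * y i ^ 2 ∧
      w ⬝ᵥ w = ∑ i, y i ^ 2 := by
  set U : Matrix ι ι ℝ := (hH.eigenvectorUnitary : Matrix ι ι ℝ) with hU
  have h1 : U * Uᵀ = 1 := by
    have := (Matrix.mem_unitaryGroup_iff (A := U)).1 hH.eigenvectorUnitary.2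
    simpa [Matrix.star_eq_conjTranspose, Matrix.conjTranspose_eq_transpose_of_trivial] using this
  have h2 : H = U * Matrix.diagonal hH.eigenvalues * Uᵀ := by
    have := hH.spectral_theorem
    rw [Unitary.conjStarAlgAut_apply] at this
    simpa [Matrix.star_eq_conjTranspose, Matrix.conjTranspose_eq_transpose_of_trivial, Function.comp_def] using this
  refine ⟨Uᵀ *ᵥ w, ?_, ?_⟩
  · generalize hH.eigenvalues = d at *
    rw [h2, ← Matrix.mulVec_mulVec, ← Matrix.mulVec_mulVec, Matrix.dotProduct_mulVec,
      ← Matrix.mulVec_transpose]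
    simp only [dotProduct, Matrix.mulVec_diagonal]
    refine Finset.sum_congr rfl fun i _ => by ring
  · have : w ⬝ᵥ w = w ⬝ᵥ ((U * Uᵀ) *ᵥ w) := by rw [h1, Matrix.one_mulVec]
    rw [this, ← Matrix.mulVec_mulVec, Matrix.dotProduct_mulVec, ← Matrix.mulVec_transpose]
    simp only [dotProduct]
    refine Finset.sum_congr rfl fun i _ => by ring

lemma lmin_mul_le {ι : Type*} [Fintype ι] [DecidableEq ι]
    (H : Matrix ι ι ℝ) (hH : H.IsHermitian) (w : ι → ℝ) :
    lmin H hH * (w ⬝ᵥ w) ≤ w ⬝ᵥ (H *ᵥ w) := by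
  obtain ⟨y, h1, h2⟩ := quad_diag H hH w
  rw [h1, h2, Finset.mul_sum]
  refine Finset.sum_le_sum fun i _ => mul_le_mul_of_nonneg_right ?_ (sq_nonneg _)
  exact ciInf_le (Set.finite_range _).bddBelow i

lemma le_lmax_mul {ι : Type*} [Fintype ι] [DecidableEq ι]
    (H : Matrix ι ι ℝ) (hH : H.IsHermitian) (w : ι → ℝ) :
    w ⬝ᵥ (H *ᵥ w) ≤ lmax H hH * (w ⬝ᵥ w) := by
  obtain ⟨y, h1, h2⟩ := quad_diag H hH w
  rw [h1, h2, Finset.mul_sum]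
  refine Finset.sum_le_sum fun i _ => mul_le_mul_of_nonneg_right ?_ (sq_nonneg _)
  exact le_ciSup (Set.finite_range _).bddAbove i

lemma exists_eigvec {ι : Type*} [Fintype ι] [DecidableEq ι]
    (H : Matrix ι ι ℝ) (hH : H.IsHermitian) (i : ι) :
    ∃ v : ι → ℝ, 0 < v ⬝ᵥ v ∧ v ⬝ᵥ (H *ᵥ v) = hH.eigenvalues i * (v ⬝ᵥ v) := by
  have hne : (⇑(hH.eigenvectorBasis i) : ι → ℝ) ≠ 0 := by
    intro h
    apply hH.eigenvectorBasis.orthonormal.ne_zero i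
    ext j
    exact congrFun h j
  refine ⟨⇑(hH.eigenvectorBasis i), ?_, ?_⟩
  · simpa using Matrix.dotProduct_star_self_pos_iff.2 hne
  · rw [hH.mulVec_eigenvectorBasis, dotProduct_smul, smul_eq_mul]

lemma quad_gram {ι κ : Type*} [Fintype ι] [Fintype κ]
    (X : Matrix ι κ ℝ) (w : ι → ℝ) :
    w ⬝ᵥ ((X * Xᵀ) *ᵥ w) = (Xᵀ *ᵥ w) ⬝ᵥ (Xᵀ *ᵥ w) := by
  rw [← Matrix.mulVec_mulVec, Matrix.dotProduct_mulVec, ← Matrix.mulVec_transpose]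

lemma dp_nonneg {ι : Type*} [Fintype ι] (w : ι → ℝ) : 0 ≤ w ⬝ᵥ w :=
  Finset.sum_nonneg fun i _ => mul_self_nonneg _

lemma quad_new {r n : ℕ} (X : Matrix (Fin r) (Fin n) ℝ) (g : Fin r → ℝ) (γ : ℝ)
    (v : Fin r → ℝ) (t : ℝ) :
    let Y := Matrix.fromBlocks X (colv g) 0 (Matrix.of fun _ _ => γ : Matrix (Fin 1) (Fin 1) ℝ)
    let w : Fin r ⊕ Fin 1 → ℝ := Sum.elim v (fun _ => t)
    w ⬝ᵥ ((Y * Yᵀ) *ᵥ w) = v ⬝ᵥ ((X * Xᵀ) *ᵥ v) + (g ⬝ᵥ v + γ * t) ^ 2 := by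
  intro Y w
  rw [quad_gram, quad_gram]
  have : Yᵀ *ᵥ w = Sum.elim (Xᵀ *ᵥ v) (fun _ => g ⬝ᵥ v + γ * t) := by
    ext j
    rcases j with j | j
    · simp [Y, w, Matrix.mulVec, dotProduct, Fintype.sum_sum_type]
    · simp [Y, w, Matrix.mulVec, dotProduct, Fintype.sum_sum_type, colv]
  rw [this]
  simp [dotProduct, Fintype.sum_sum_type, sq]

lemma dp_elim {r : ℕ} (v : Fin r → ℝ) (t : ℝ) :
    (Sum.elim v (fun _ => t) : Fin r ⊕ Fin 1 → ℝ) ⬝ᵥ Sum.elim v (fun _ => t)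
      = v ⬝ᵥ v + t ^ 2 := by
  simp [dotProduct, Fintype.sum_sum_type, sq]

/-- appending the column `(g; γ)` (with `γ ≠ 0`) and a zero row to `X̃`
can only decrease `λ_min(X̃X̃ᵀ)` and increase `λ_max(X̃X̃ᵀ)`; consequently the spectral
condition number of `X̃X̃ᵀ` does not decrease when `X̃X̃ᵀ` is positive definite. -/
theorem stmt0 {r n : ℕ} (hr : 0 < r)
    (X : Matrix (Fin r) (Fin n) ℝ) (g : Fin r → ℝ) (γ : ℝ) (hγ : γ ≠ 0)
    (Xnew : Matrix (Fin r ⊕ Fin 1) (Fin n ⊕ Fin 1) ℝ)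
    (hXnew : Xnew = Matrix.fromBlocks X (colv g) 0 (Matrix.of fun _ _ => γ))
    (hOld : (X * Xᵀ).IsHermitian) (hNew : (Xnew * Xnewᵀ).IsHermitian) :
    lmin (Xnew * Xnewᵀ) hNew ≤ lmin (X * Xᵀ) hOld ∧
    lmax (X * Xᵀ) hOld ≤ lmax (Xnew * Xnewᵀ) hNew ∧
    ((X * Xᵀ).PosDef →
      lmax (X * Xᵀ) hOld / lmin (X * Xᵀ) hOld ≤
        lmax (Xnew * Xnewᵀ) hNew / lmin (Xnew * Xnewᵀ) hNew) := by
  subst hXnew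
  haveI : Nonempty (Fin r) := ⟨⟨0, hr⟩⟩
  have hnn : ∀ i, 0 ≤ hNew.eigenvalues i := by
    intro i
    obtain ⟨v, hv, he⟩ := exists_eigvec _ hNew i
    rw [quad_gram] at he
    have := dp_nonneg ((Matrix.fromBlocks X (colv g) 0 (Matrix.of fun _ _ => γ : Matrix (Fin 1) (Fin 1) ℝ))ᵀ *ᵥ v)
    rw [he] at this
    exact nonneg_of_mul_nonneg_left this hv
  have hmin0 : 0 ≤ lmin _ hNew := le_ciInf hnn
  have hmin : lmin _ hNew ≤ lmin (X * Xᵀ) hOld := by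
    refine le_ciInf fun i => ?_
    obtain ⟨v, hv, he⟩ := exists_eigvec _ hOld i
    have h := lmin_mul_le _ hNew (Sum.elim v (fun _ => -(g ⬝ᵥ v) / γ))
    rw [quad_new, dp_elim, he] at h
    have h0 : g ⬝ᵥ v + γ * (-(g ⬝ᵥ v) / γ) = 0 := by field_simp; ring
    rw [h0] at h
    have h3 := mul_nonneg hmin0 (sq_nonneg (-(g ⬝ᵥ v) / γ))
    refine le_of_mul_le_mul_right ?_ hv
    linarith
  have hmax : lmax (X * Xᵀ) hOld ≤ lmax _ hNew := by
    refine ciSup_le fun i => ?_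
    obtain ⟨v, hv, he⟩ := exists_eigvec _ hOld i
    have h := le_lmax_mul _ hNew (Sum.elim v (fun _ => 0))
    rw [quad_new, dp_elim, he] at h
    refine le_of_mul_le_mul_right ?_ hv
    have := sq_nonneg (g ⬝ᵥ v + γ * 0)
    linarith
  refine ⟨hmin, hmax, fun hpd => ?_⟩
  have hpos : 0 < lmin _ hNew := by
    obtain ⟨i, hi⟩ := exists_eq_ciInf_of_finite (f := hNew.eigenvalues)
    unfold lmin
    rw [← hi]
    refine lt_of_le_of_ne (hnn i) fun h0 => ?_
    obtain ⟨v, hv, he⟩ := exists_eigvec _ hNew i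
    rw [← h0, zero_mul] at he
    have hvv : v = Sum.elim (fun j => v (Sum.inl j)) (fun _ => v (Sum.inr 0)) := by
      ext j
      rcases j with j | j
      · rfl
      · simp [Subsingleton.elim j 0]
    rw [hvv] at he hv
    rw [quad_new] at he
    rw [dp_elim] at hv
    set u : Fin r → ℝ := fun j => v (Sum.inl j)
    set t := v (Sum.inr 0)
    have hu : u = 0 := by
      by_contra hne
      have h5 := hpd.dotProduct_mulVec_pos hne
      simp only [star_trivial] at h5
      have := sq_nonneg (g ⬝ᵥ u + γ * t)
      linarith
    rw [hu] at he hv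
    simp at he hv
    rcases he with h | h
    · exact hγ h
    · simp [h] at hv
  have hmaxnn : 0 ≤ lmax _ hNew := by
    have i : Fin r ⊕ Fin 1 := Sum.inr 0
    exact (hnn i).trans (le_ciSup (f := hNew.eigenvalues) (Set.finite_range _).bddAbove i)
  exact div_le_div₀ hmaxnn hmax hpos hmin
end

section
/- Let Q_x ∈ ℝ^{m×r_x} and Q_y ∈ ℝ^{m×r_y} have orthonormal columns, let X̃ ∈ ℝ^{r_x×n} have full row rank, and let Ỹ ∈ ℝ^{r_y×n}. Set M = Ỹ X̃ᵀ(X̃ X̃ᵀ)⁻¹ and A_ex = Q_y M Q_xᵀ. If w ∈ ℝ^{r_x} and λ ∈ ℝ satisfy (Q_xᵀ Q_y) M w = λ w, then the Exact DMD vector z = Q_y M w satisfies A_ex z = λ z; hence if z ≠ 0 it is an eigenvector of A_ex with eigenvalue λ. -/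
open Matrix

/-- the Exact DMD vector `z = Q_y M w` associated with an eigenpair
`((Q_xᵀQ_y)M) w = λ w` satisfies `A_ex z = λ z` for `A_ex = Q_y M Q_xᵀ`
with `M = ỸX̃ᵀ(X̃X̃ᵀ)⁻¹`; hence if `z ≠ 0` it is an eigenvector of `A_ex`. -/
theorem stmt4 {m rx ry n : ℕ}
    (Qx : Matrix (Fin m) (Fin rx) ℝ) (hQx : Qxᵀ * Qx = 1)
    (Qy : Matrix (Fin m) (Fin ry) ℝ) (hQy : Qyᵀ * Qy = 1)
    (X : Matrix (Fin rx) (Fin n) ℝ) (hX : IsUnit (X * Xᵀ).det)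
    (Y : Matrix (Fin ry) (Fin n) ℝ)
    (M : Matrix (Fin ry) (Fin rx) ℝ) (hM : M = Y * Xᵀ * (X * Xᵀ)⁻¹)
    (Aex : Matrix (Fin m) (Fin m) ℝ) (hA : Aex = Qy * M * Qxᵀ)
    (w : Fin rx → ℝ) (lam : ℝ)
    (hw : ((Qxᵀ * Qy) * M).mulVec w = lam • w) :
    Aex.mulVec (Qy.mulVec (M.mulVec w)) = lam • Qy.mulVec (M.mulVec w) ∧
    (Qy.mulVec (M.mulVec w) ≠ 0 →
      Module.End.HasEigenvector (Matrix.mulVecLin Aex) lam (Qy.mulVec (M.mulVec w))) := by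
  have key : Aex.mulVec (Qy.mulVec (M.mulVec w)) = lam • Qy.mulVec (M.mulVec w) := by
    have h : Aex.mulVec (Qy.mulVec (M.mulVec w))
        = Qy.mulVec (M.mulVec (((Qxᵀ * Qy) * M).mulVec w)) := by
      rw [hA]
      simp only [Matrix.mulVec_mulVec, Matrix.mul_assoc]
    rw [h, hw, Matrix.mulVec_smul, Matrix.mulVec_smul]
  refine ⟨key, fun hz => ⟨?_, hz⟩⟩
  rw [Module.End.mem_eigenspace_iff, Matrix.mulVecLin_apply]
  exact key
end

section
/- Generalized Sherman–Morrison DMD update, basis-expanding case. Let Ŝ ∈ ℝ^{r×n} have full row rank, set G = Ŝ Ŝᵀ, let S̃_y ∈ ℝ^{p×n}, and set Ã = (S̃_y Ŝᵀ) G⁻¹. Let g_x ∈ ℝ^r, γ_x ≠ 0, g_y ∈ ℝ^p. Define X̃_new = [[Ŝ, g_x],[0ᵀ, γ_x]] ∈ ℝ^{(r+1)×(n+1)} and Ỹ_new = [S̃_y, g_y] ∈ ℝ^{p×(n+1)}. Then G_new = X̃_new X̃_newᵀ is invertible and (Ỹ_new X̃_newᵀ) G_new⁻¹ = [Ã, (g_y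 − Ã g_x)/γ_x], i.e. the updated matrix is Ã with the column (g_y − Ã g_x)/γ_x appended. -/
open Matrix

/-- generalized Sherman–Morrison DMD update, basis-expanding case.
With `Ŝ` of full row rank, `G = ŜŜᵀ`, `Ã = (S̃_yŜᵀ)G⁻¹`, `γ_x ≠ 0`,
`X̃_new = [[Ŝ, g_x],[0ᵀ, γ_x]]` and `Ỹ_new = [S̃_y, g_y]`, the matrix
`G_new = X̃_new X̃_newᵀ` is invertible and
`(Ỹ_new X̃_newᵀ)G_new⁻¹ = [Ã, (g_y − Ãg_x)/γ_x]`. -/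
theorem stmt15 {r n p : ℕ}
    (S : Matrix (Fin r) (Fin n) ℝ) (hS : IsUnit (S * Sᵀ).det)
    (Sy : Matrix (Fin p) (Fin n) ℝ)
    (A : Matrix (Fin p) (Fin r) ℝ) (hA : A = Sy * Sᵀ * (S * Sᵀ)⁻¹)
    (gx : Fin r → ℝ) (γx : ℝ) (hγx : γx ≠ 0) (gy : Fin p → ℝ)
    (Xnew : Matrix (Fin r ⊕ Fin 1) (Fin n ⊕ Fin 1) ℝ)
    (hXnew : Xnew = Matrix.fromBlocks S (colv gx) 0 (Matrix.of fun _ _ => γx))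
    (Ynew : Matrix (Fin p) (Fin n ⊕ Fin 1) ℝ)
    (hYnew : Ynew = Matrix.fromCols Sy (colv gy)) :
    IsUnit (Xnew * Xnewᵀ).det ∧
    Ynew * Xnewᵀ * (Xnew * Xnewᵀ)⁻¹ =
      Matrix.fromCols A (colv (γx⁻¹ • (gy - A.mulVec gx))) := by
  have hAG : A * (S * Sᵀ) = Sy * Sᵀ := by
    rw [hA, Matrix.mul_assoc, Matrix.nonsing_inv_mul _ hS, Matrix.mul_one]
  have hdet : IsUnit (Xnew * Xnewᵀ).det := by
    have hX : Xnew * Xnewᵀ =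
        Matrix.fromBlocks 1 (colv gx) 0 (Matrix.of fun _ _ => γx) *
          Matrix.fromBlocks (S * Sᵀ) 0 0 (1 : Matrix (Fin 1) (Fin 1) ℝ) *
          (Matrix.fromBlocks 1 (colv gx) 0 (Matrix.of fun _ _ => γx))ᵀ := by
      rw [hXnew]
      simp [Matrix.fromBlocks_transpose, Matrix.fromBlocks_multiply]
    rw [hX, Matrix.det_mul, Matrix.det_mul, Matrix.det_transpose,
      Matrix.det_fromBlocks_zero₂₁, Matrix.det_fromBlocks_zero₂₁]
    have := hS.ne_zero
    simp only [Matrix.det_one, Matrix.det_fin_one, Matrix.of_apply, one_mul, mul_one]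
    exact isUnit_iff_ne_zero.mpr (mul_ne_zero (mul_ne_zero hγx this) hγx)
  refine ⟨hdet, ?_⟩
  have hcol : A * colv gx + colv (γx⁻¹ • (gy - A.mulVec gx)) *
      (Matrix.of fun _ _ => γx : Matrix (Fin 1) (Fin 1) ℝ) = colv gy := by
    ext i j
    simp only [Matrix.add_apply, Matrix.mul_apply, colv, Matrix.of_apply, Matrix.mulVec,
      dotProduct, Pi.smul_apply, Pi.sub_apply, smul_eq_mul, Finset.univ_unique,
      Finset.sum_singleton]
    field_simp
    ring
  have hBX : Matrix.fromCols A (colv (γx⁻¹ • (gy - A.mulVec gx))) * Xnew =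
      Matrix.fromCols (A * S) (colv gy) := by
    rw [hXnew, Matrix.fromCols_mul_fromBlocks, hcol]
    simp
  have key : Ynew * Xnewᵀ =
      Matrix.fromCols A (colv (γx⁻¹ • (gy - A.mulVec gx))) * (Xnew * Xnewᵀ) := by
    rw [← Matrix.mul_assoc, hBX, hYnew, hXnew, Matrix.fromBlocks_transpose,
      Matrix.fromCols_mul_fromBlocks, Matrix.fromCols_mul_fromBlocks,
      Matrix.mul_assoc A, hAG]
    simp
  rw [key, Matrix.mul_assoc, Matrix.mul_nonsing_inv _ hdet, Matrix.mul_one]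
end

section
/- Generalized Sherman–Morrison DMD update, rank-preserving case. Let G ∈ ℝ^{r×r} be symmetric positive definite, let G_{y,x} ∈ ℝ^{p×r}, set Ã = G_{y,x} G⁻¹, and let g ∈ ℝ^r, g_y ∈ ℝ^p. Set α = 1 + gᵀ G⁻¹ g. Then G + g gᵀ is invertible and (G_{y,x} + g_y gᵀ)(G + g gᵀ)⁻¹ = Ã − (1/α)(Ã g − g_y) gᵀ G⁻¹. -/
open Matrix

/-- generalized Sherman–Morrison DMD update, rank-preserving case.
With `G` symmetric positive definite, `Ã = G_{y,x}G⁻¹` and `α = 1 + gᵀG⁻¹g`,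
the matrix `G + ggᵀ` is invertible and
`(G_{y,x} + g_ygᵀ)(G + ggᵀ)⁻¹ = Ã − (1/α)(Ãg − g_y)gᵀG⁻¹`. -/
theorem stmt16 {r p : ℕ}
    (G : Matrix (Fin r) (Fin r) ℝ) (hG : G.PosDef)
    (Gyx : Matrix (Fin p) (Fin r) ℝ)
    (A : Matrix (Fin p) (Fin r) ℝ) (hA : A = Gyx * G⁻¹)
    (g : Fin r → ℝ) (gy : Fin p → ℝ)
    (α : ℝ) (hα : α = 1 + g ⬝ᵥ G⁻¹.mulVec g) :
    IsUnit (G + Matrix.vecMulVec g g).det ∧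
    (Gyx + Matrix.vecMulVec gy g) * (G + Matrix.vecMulVec g g)⁻¹ =
      A - α⁻¹ • Matrix.vecMulVec (A.mulVec g - gy) (Matrix.vecMul g G⁻¹) := by
  have hGu : IsUnit G.det := hG.det_pos.ne'.isUnit
  have hpsd : (vecMulVec g g).PosSemidef := by
    simpa using posSemidef_vecMulVec_self_star g
  have hS : IsUnit (G + vecMulVec g g).det := (hG.add_posSemidef hpsd).det_pos.ne'.isUnit
  have hnn : 0 ≤ g ⬝ᵥ G⁻¹.mulVec g := by
    simpa using hG.inv.posSemidef.dotProduct_mulVec_nonneg g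
  have hα0 : α ≠ 0 := by
    rw [hα]; positivity
  refine ⟨hS, ?_⟩
  have key : (A - α⁻¹ • vecMulVec (A.mulVec g - gy) (vecMul g G⁻¹)) * (G + vecMulVec g g)
      = Gyx + vecMulVec gy g := by
    have h1 : A * G = Gyx := by
      rw [hA, Matrix.mul_assoc, nonsing_inv_mul _ hGu, Matrix.mul_one]
    have h2 : vecMul (vecMul g G⁻¹) G = g := by
      rw [vecMul_vecMul, nonsing_inv_mul _ hGu, vecMul_one]
    have h3 : vecMul g G⁻¹ ⬝ᵥ g = α - 1 := by
      rw [← dotProduct_mulVec, hα]; ring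
    rw [Matrix.sub_mul, Matrix.mul_add, h1, mul_vecMulVec, Matrix.smul_mul, Matrix.mul_add,
      vecMulVec_mul, h2, vecMulVec_mul_vecMulVec, h3]
    ext i j
    simp [vecMulVec_apply]
    field_simp
    ring
  rw [← key, Matrix.mul_assoc, mul_nonsing_inv _ hS, Matrix.mul_one]
end
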